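/- arXiv:2502.06051 — 4 statements merged into one kernel-verified Lean document; each statement's English description precedes it below -/
import Mathlib

section
/- In the finite KL-regularized contextual bandit setup, let r : S×A → ℝ and Δ : S×A → ℝ with Δ(s,a) ≤ 0 for all (s,a). For γ ∈ [0,1] define the tilted Gibbs policy π_γ(a|s) = π_ref(a|s)·exp(η·(r(s,a) + γ·Δ(s,a))) / Σ_{a'} π_ref(a'|s)·exp(η·(r(s,a') + γ·Δ(s,a'))), and set G(γ) = Σ_{s∈S} ρ(s)·Σ_{a∈A} π_γ(a|s)·Δ(s,a)². Then G(γ) ≤ G(0) for every γ ∈ [0,1]; that is, 0 is a maximizer of G on [0,1]. -/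
/-- The Gibbs policy of `g` relative to the reference policy `πref` with inverse
temperature `η`. -/
noncomputable def gibbs {S A : Type*} [Fintype A] (πref : S → A → ℝ) (η : ℝ)
    (g : S → A → ℝ) : S → A → ℝ :=
  fun s a => πref s a * Real.exp (η * g s a) / ∑ a', πref s a' * Real.exp (η * g s a')

/-!
Adding `h` to the exponent of a Gibbs policy amounts to tilting that policy by `exp (η * h)`.
By Chebyshev's sum inequality such a tilt can only decrease the mean of a function that antivaries
with `h`. Increasing `γ` by `t ≥ 0` tilts `π_γ` by `exp (η * t * Δ)`, and `Δ ^ 2` antivaries with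
`Δ` because `Δ ≤ 0`.
-/

section Chebyshev

variable {ι R : Type*} [CommRing R]

theorem sum_sum_mul_sub_mul_sub (I : Finset ι) (w f g : ι → R) :
    ∑ i ∈ I, ∑ j ∈ I, w i * w j * ((f j - f i) * (g j - g i)) =
      2 * ((∑ i ∈ I, w i) * ∑ i ∈ I, w i * (f i * g i) -
        (∑ i ∈ I, w i * f i) * ∑ i ∈ I, w i * g i) := by
  calc
    _ = (∑ i ∈ I, w i) * (∑ i ∈ I, w i * (f i * g i)) -
          (∑ i ∈ I, w i * f i) * (∑ i ∈ I, w i * g i) -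
          (∑ i ∈ I, w i * g i) * (∑ i ∈ I, w i * f i) +
          (∑ i ∈ I, w i * (f i * g i)) * (∑ i ∈ I, w i) := by
      simp only [Finset.sum_mul_sum, ← Finset.sum_sub_distrib, ← Finset.sum_add_distrib]
      refine Finset.sum_congr rfl fun i _ => Finset.sum_congr rfl fun j _ => ?_
      ring
    _ = _ := by ring

variable [LinearOrder R] [IsStrictOrderedRing R]

theorem sum_mul_sum_le_sum_mul_sum_of_antivaryOn {I : Finset ι} {w f g : ι → R}
    (hw : ∀ i ∈ I, 0 ≤ w i) (hfg : AntivaryOn f g I) :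
    (∑ i ∈ I, w i) * ∑ i ∈ I, w i * (f i * g i) ≤
      (∑ i ∈ I, w i * f i) * ∑ i ∈ I, w i * g i := by
  have double_sum_nonpos :
      ∑ i ∈ I, ∑ j ∈ I, w i * w j * ((f j - f i) * (g j - g i)) ≤ 0 :=
    Finset.sum_nonpos fun i hi => Finset.sum_nonpos fun j hj =>
      mul_nonpos_of_nonneg_of_nonpos (mul_nonneg (hw i hi) (hw j hj))
        (hfg.sub_mul_sub_nonpos hi hj)
  rw [sum_sum_mul_sub_mul_sub] at double_sum_nonpos
  linarith

theorem antivary_sq_of_nonpos {f : ι → R} (hf : ∀ i, f i ≤ 0) : Antivary f (fun i => f i ^ 2) := by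
  intro i j hij
  exact (neg_lt_neg_iff.mp
    (lt_of_pow_lt_pow_left₀ 2 (neg_nonneg.mpr (hf j)) (by simpa only [neg_sq] using hij))).le

end Chebyshev

theorem sum_mul_exp_pos {ι : Type*} {I : Finset ι} {w : ι → ℝ} (hw : ∀ i ∈ I, 0 ≤ w i)
    (hmass : 0 < ∑ i ∈ I, w i) (f : ι → ℝ) : 0 < ∑ i ∈ I, w i * Real.exp (f i) := by
  obtain ⟨i, hi, hwi⟩ := (Finset.sum_pos_iff_of_nonneg hw).mp hmass
  exact Finset.sum_pos' (fun j hj => mul_nonneg (hw j hj) (Real.exp_nonneg _))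
    ⟨i, hi, mul_pos hwi (Real.exp_pos _)⟩

section Gibbs

variable {S A : Type*} [Fintype A] {π : S → A → ℝ} {s : S}

theorem gibbs_nonneg (hπ : ∀ a, 0 ≤ π s a) (η : ℝ) (g : S → A → ℝ) (a : A) :
    0 ≤ gibbs π η g s a :=
  div_nonneg (mul_nonneg (hπ a) (Real.exp_nonneg _))
    (Finset.sum_nonneg fun b _ => mul_nonneg (hπ b) (Real.exp_nonneg _))

theorem sum_gibbs_eq_one {η : ℝ} {g : S → A → ℝ}
    (hZ : ∑ a, π s a * Real.exp (η * g s a) ≠ 0) : ∑ a, gibbs π η g s a = 1 := by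
  simp only [gibbs]
  rw [← Finset.sum_div, div_self hZ]

theorem gibbs_gibbs {η : ℝ} {g : S → A → ℝ} (hZ : ∑ a, π s a * Real.exp (η * g s a) ≠ 0)
    (h : S → A → ℝ) (a : A) :
    gibbs (gibbs π η g) η h s a = gibbs π η (g + h) s a := by
  simp only [gibbs, Pi.add_apply, mul_add, Real.exp_add, div_mul_eq_mul_div, ← Finset.sum_div,
    ← mul_assoc]
  rw [div_div_div_cancel_right₀ hZ]

theorem sum_gibbs_mul_le_of_antivary (hπ : ∀ a, 0 ≤ π s a) (hmass : ∑ a, π s a = 1) {η : ℝ}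
    (hη : 0 ≤ η) {h : S → A → ℝ} {f : A → ℝ} (hf : Antivary (h s) f) :
    ∑ a, gibbs π η h s a * f a ≤ ∑ a, π s a * f a := by
  have exp_antivary : Antivary (fun a => Real.exp (η * h s a)) f := fun a b hab =>
    Real.exp_le_exp.mpr (mul_le_mul_of_nonneg_left (hf hab) hη)
  have chebyshev := sum_mul_sum_le_sum_mul_sum_of_antivaryOn
    (I := Finset.univ) (fun a _ => hπ a) (exp_antivary.antivaryOn _)
  simp only [gibbs, div_mul_eq_mul_div, ← Finset.sum_div]
  rw [div_le_iff₀ (sum_mul_exp_pos (fun a _ => hπ a) (hmass ▸ one_pos) _),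
    mul_comm (∑ a, π s a * f a)]
  simpa only [hmass, one_mul, mul_assoc] using chebyshev

theorem antitone_sum_gibbs_mul (hπ : ∀ a, 0 ≤ π s a) (hmass : 0 < ∑ a, π s a) {η : ℝ}
    (hη : 0 ≤ η) (r : S → A → ℝ) {Δ : S → A → ℝ} {f : A → ℝ} (hf : Antivary (Δ s) f) :
    Antitone fun γ : ℝ => ∑ a, gibbs π η (r + γ • Δ) s a * f a := by
  intro γ γ' hγ
  have hZ : ∑ a, π s a * Real.exp (η * (r + γ • Δ) s a) ≠ 0 :=
    (sum_mul_exp_pos (fun a _ => hπ a) hmass _).ne'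
  have scaled_antivary : Antivary (((γ' - γ) • Δ) s) f := fun a b hab =>
    mul_le_mul_of_nonneg_left (hf hab) (sub_nonneg.mpr hγ)
  calc
    ∑ a, gibbs π η (r + γ' • Δ) s a * f a
        = ∑ a, gibbs (gibbs π η (r + γ • Δ)) η ((γ' - γ) • Δ) s a * f a := by
      simp only [gibbs_gibbs hZ, add_assoc, ← add_smul, add_sub_cancel]
    _ ≤ ∑ a, gibbs π η (r + γ • Δ) s a * f a :=
      sum_gibbs_mul_le_of_antivary (gibbs_nonneg hπ η _) (sum_gibbs_eq_one hZ) hη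
        scaled_antivary

end Gibbs

theorem stmt4_general {S A : Type*} [Fintype S] [Fintype A]
    (ρ : S → ℝ) (hρ : ∀ s, 0 ≤ ρ s)
    (πref : S → A → ℝ) (hπ : ∀ s a, 0 ≤ πref s a) (hmass : ∀ s, 0 < ∑ a, πref s a)
    (η : ℝ) (hη : 0 ≤ η) (r Δ : S → A → ℝ) (hΔ : ∀ s a, Δ s a ≤ 0) :
    Antitone fun γ : ℝ => ∑ s, ρ s * ∑ a, gibbs πref η (r + γ • Δ) s a * Δ s a ^ 2 :=
  fun _ _ hγ => Finset.sum_le_sum fun s _ => mul_le_mul_of_nonneg_left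
    (antitone_sum_gibbs_mul (hπ s) (hmass s) hη r (antivary_sq_of_nonpos (hΔ s)) hγ) (hρ s)

/-- Monotonicity of `G`: for a nonpositive perturbation `Δ`, the function
`G(γ) = E_{ρ × π_γ}[Δ²]` with `π_γ` the Gibbs policy of `r + γ·Δ` is maximized
at `γ = 0` over `[0,1]`. -/
theorem stmt4 {S A : Type*} [Fintype S] [Fintype A] [Nonempty S] [Nonempty A]
    (ρ : S → ℝ) (hρ0 : ∀ s, 0 ≤ ρ s) (hρ1 : ∑ s, ρ s = 1)
    (πref : S → A → ℝ) (hpos : ∀ s a, 0 < πref s a) (hsum : ∀ s, ∑ a, πref s a = 1)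
    (η : ℝ) (hη : 0 < η) (r Δ : S → A → ℝ) (hΔ : ∀ s a, Δ s a ≤ 0)
    (G : ℝ → ℝ)
    (hG : ∀ γ, G γ = ∑ s, ρ s * ∑ a,
      gibbs πref η (fun s' a' => r s' a' + γ * Δ s' a') s a * (Δ s a) ^ 2) :
    ∀ γ ∈ Set.Icc (0 : ℝ) 1, G γ ≤ G 0 := by
  intro γ hγ
  rw [hG, hG]
  exact stmt4_general ρ hρ0 πref (fun s a => (hpos s a).le) (fun s => hsum s ▸ one_pos)
    η hη.le r Δ hΔ hγ.1
end

section
/- Let x ∈ ℝ and define two probability mass functions on the two-element set {1, 2} by π₊(1) = e^x/(e^x + 1), π₊(2) = 1/(e^x + 1), and π₋(1) = e^{−x}/(e^{−x} + 1), π₋(2) = 1/(e^{−x} + 1). Then for every probability mass function μ on {1, 2}: KL(μ‖π₊) + KL(μ‖π₋) ≥ log( (e^x + 1)·(e^{−x} + 1) / 4 ). -/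
/-!
Each pair of terms satisfies `μ log (μ / p) + μ log (μ / q) = 2 μ log (μ / √(p q))`, so the sum of
the two divergences is twice the divergence from the unnormalized geometric mean `√(p q)`, which the
log-sum inequality bounds below by `-2 log ∑ √(p q)`. For the two logistic distributions `√(p q)` is
constant, equal to `1 / √((eˣ + 1)(e⁻ˣ + 1))`.
-/

open Finset Real

section LogSum

variable {ι : Type*} {s : Finset ι} {μ p q w : ι → ℝ}

theorem sum_mul_log_sum_div_sum_le (hμ : ∀ i ∈ s, 0 ≤ μ i) (hw : ∀ i ∈ s, 0 < w i) :
    (∑ i ∈ s, μ i) * log ((∑ i ∈ s, μ i) / ∑ i ∈ s, w i) ≤ ∑ i ∈ s, μ i * log (μ i / w i) := by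
  rcases s.eq_empty_or_nonempty with rfl | hs
  · simp
  have hW : 0 < ∑ i ∈ s, w i := sum_pos hw hs
  have weight_mul_ratio : ∀ i ∈ s, w i * (μ i / w i) = μ i := fun i hi ↦
    mul_div_cancel₀ (μ i) (hw i hi).ne'
  have mean_ratio : s.centerMass w (fun i ↦ μ i / w i) = (∑ i ∈ s, μ i) / ∑ i ∈ s, w i := by
    rw [centerMass, smul_eq_mul, ← div_eq_inv_mul]
    exact congrArg (· / _) (sum_congr rfl weight_mul_ratio)
  have mean_ratio_mul_log : s.centerMass w ((fun t ↦ t * log t) ∘ fun i ↦ μ i / w i) =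
      (∑ i ∈ s, μ i * log (μ i / w i)) / ∑ i ∈ s, w i := by
    rw [centerMass, smul_eq_mul, ← div_eq_inv_mul]
    refine congrArg (· / _) (sum_congr rfl fun i hi ↦ ?_)
    rw [smul_eq_mul, Function.comp_apply, ← mul_assoc, weight_mul_ratio i hi]
  have jensen := convexOn_mul_log.map_centerMass_le (fun i hi ↦ (hw i hi).le) hW
    fun i hi ↦ div_nonneg (hμ i hi) (hw i hi).le
  rwa [mean_ratio, mean_ratio_mul_log, div_mul_eq_mul_div, div_le_div_iff_of_pos_right hW] at jensen

theorem mul_log_div_add_mul_log_div {m a b : ℝ} (ha : 0 < a) (hb : 0 < b) :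
    m * log (m / a) + m * log (m / b) = 2 * (m * log (m / √(a * b))) := by
  rcases eq_or_ne m 0 with rfl | hm
  · simp
  rw [log_div hm ha.ne', log_div hm hb.ne', log_div hm (sqrt_pos.2 (mul_pos ha hb)).ne',
    log_sqrt (mul_pos ha hb).le, log_mul ha.ne' hb.ne']
  ring

theorem neg_two_mul_log_sum_sqrt_mul_le (hμ : ∀ i ∈ s, 0 ≤ μ i) (hμ_sum : ∑ i ∈ s, μ i = 1)
    (hp : ∀ i ∈ s, 0 < p i) (hq : ∀ i ∈ s, 0 < q i) :
    -2 * log (∑ i ∈ s, √(p i * q i)) ≤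
      ∑ i ∈ s, μ i * log (μ i / p i) + ∑ i ∈ s, μ i * log (μ i / q i) := by
  have log_sum := sum_mul_log_sum_div_sum_le hμ fun i hi ↦ sqrt_pos.2 (mul_pos (hp i hi) (hq i hi))
  rw [hμ_sum, one_mul, one_div, log_inv] at log_sum
  calc -2 * log (∑ i ∈ s, √(p i * q i))
      = 2 * -log (∑ i ∈ s, √(p i * q i)) := by ring
    _ ≤ 2 * ∑ i ∈ s, μ i * log (μ i / √(p i * q i)) := by gcongr
    _ = ∑ i ∈ s, μ i * log (μ i / p i) + ∑ i ∈ s, μ i * log (μ i / q i) := by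
      rw [mul_sum, ← sum_add_distrib]
      exact sum_congr rfl fun i hi ↦ (mul_log_div_add_mul_log_div (hp i hi) (hq i hi)).symm

end LogSum

/-- Per-state suboptimality lower bound for the hard instance: for the two
logistic pmfs `π₊, π₋` on `{1,2}` induced by `±x`, every pmf `μ` satisfies
`KL(μ‖π₊) + KL(μ‖π₋) ≥ log((eˣ + 1)·(e⁻ˣ + 1)/4)`. -/
theorem stmt15 (x : ℝ)
    (πp πm : Fin 2 → ℝ)
    (hπp0 : πp 0 = Real.exp x / (Real.exp x + 1))
    (hπp1 : πp 1 = 1 / (Real.exp x + 1))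
    (hπm0 : πm 0 = Real.exp (-x) / (Real.exp (-x) + 1))
    (hπm1 : πm 1 = 1 / (Real.exp (-x) + 1))
    (μ : Fin 2 → ℝ) (hμ0 : ∀ a, 0 ≤ μ a) (hμ1 : ∑ a, μ a = 1) :
    Real.log ((Real.exp x + 1) * (Real.exp (-x) + 1) / 4) ≤
      (∑ a, μ a * Real.log (μ a / πp a)) + ∑ a, μ a * Real.log (μ a / πm a) := by
  set Z := (exp x + 1) * (exp (-x) + 1)
  have Z_pos : 0 < Z := by positivity
  have πp_pos : ∀ a, 0 < πp a := Fin.forall_fin_two.2 ⟨hπp0 ▸ by positivity, hπp1 ▸ by positivity⟩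
  have πm_pos : ∀ a, 0 < πm a := Fin.forall_fin_two.2 ⟨hπm0 ▸ by positivity, hπm1 ▸ by positivity⟩
  have mul_eq_inv : ∀ a, πp a * πm a = Z⁻¹ := by
    refine Fin.forall_fin_two.2 ⟨?_, ?_⟩
    · rw [hπp0, hπm0, div_mul_div_comm, ← exp_add, add_neg_cancel, exp_zero, one_div]
    · rw [hπp1, hπm1, div_mul_div_comm, one_mul, one_div]
  have sum_sqrt_mul : ∑ a, √(πp a * πm a) = √(Z / 4)⁻¹ := by
    have sqrt_four : √(4 : ℝ) = 2 := (sqrt_eq_iff_mul_self_eq_of_pos two_pos).2 (by norm_num)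
    rw [Fin.sum_univ_two, mul_eq_inv, mul_eq_inv, ← two_mul, inv_div, div_eq_mul_inv,
      sqrt_mul zero_le_four, sqrt_four]
  calc log (Z / 4)
      = -2 * log (∑ a, √(πp a * πm a)) := by
        rw [sum_sqrt_mul, log_sqrt (inv_pos.2 (div_pos Z_pos four_pos)).le, log_inv]
        ring
    _ ≤ _ := neg_two_mul_log_sum_sqrt_mul_le (fun a _ ↦ hμ0 a) hμ1 (fun a _ ↦ πp_pos a)
        fun a _ ↦ πm_pos a
end

section
/- Let α > 0, η > 0, and 0 < δ ≤ α/η. On the two-element action set {1, 2} with uniform reference q(1) = q(2) = 1/2, let f(x) = (α/2)·(x − 1)² and for a reward vector h : {1,2} → ℝ define F_h(π) = Σ_a π(a)·h(a) − η⁻¹·Σ_a q(a)·f(π(a)/q(a)) on probability mass functions π. Let r₁ = (1/2 + δ, 1/2 − δ) and r₂ = (1/2 − δ, 1/2 + δ). Then for every probability mass function π̂ on {1, 2}: ( sup_π F_{r₁}(π) − F_{r₁}(π̂) ) + ( sup_π F_{r₂}(π) − F_{r₂}(π̂) ) ≥ η·δ²/α, where each supremum is over all probability mass functions on {1, 2}.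 -/
/-!
Completing the square, the objective `F_h` equals its maximal value minus `α / (2η)` times the
squared distance, in the Hilbert norm `∑ a, x(a)² / q(a)`, from `π` to the explicit maximizer
`π*_h = q (1 + (η / α) (h - E_q h))`. For two rewards the parallelogram inequality then bounds the
sum of the two suboptimality gaps at any `π` below by `α / (4η)` times the squared distance between
the two maximizers, which is `η / (4α) · Var_q(r₁ - r₂)`.
-/

open Set

section ChiSqRegularization

variable {ι : Type*} [Fintype ι] {α η : ℝ} {q : ι → ℝ}

/-- The variance of `h` under the weights `q`, whose mean is `q ⬝ᵥ h`; meant for `∑ a, q a = 1`. -/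
noncomputable def weightedVariance (q h : ι → ℝ) : ℝ := ∑ a, q a * (h a - q ⬝ᵥ h) ^ 2

/-- The `χ²`-type squared distance between `π` and `ρ` relative to the reference `q`, which measures
suboptimality; at `ρ = q` it is the `χ²`-divergence of `π` from `q`. Where `q a = 0` the junk value
of the quotient drops the term. -/
noncomputable def chiSqDist (q π ρ : ι → ℝ) : ℝ := ∑ a, (π a - ρ a) ^ 2 / q a

/-- The objective `F_h(π)` with reference `q`, inverse temperature `η` and regularizer
`f(x) = (α / 2) (x - 1)²`. It is defined for all vectors `π`, not only for probability mass
functions. -/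
noncomputable def chiSqObjective (α η : ℝ) (q h π : ι → ℝ) : ℝ :=
  π ⬝ᵥ h - η⁻¹ * ∑ a, q a * (α / 2 * (π a / q a - 1) ^ 2)

/-- The maximizer of `chiSqObjective α η q h` on the hyperplane `∑ a, π a = 1`. It maximizes over
probability mass functions when its entries are nonnegative. -/
noncomputable def chiSqMaximizer (α η : ℝ) (q h : ι → ℝ) (a : ι) : ℝ :=
  q a * (1 + η / α * (h a - q ⬝ᵥ h))

lemma chiSqDist_nonneg (hq : ∀ a, 0 ≤ q a) (π ρ : ι → ℝ) : 0 ≤ chiSqDist q π ρ :=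
  Finset.sum_nonneg fun a _ => div_nonneg (sq_nonneg _) (hq a)

lemma chiSqDist_self (q π : ι → ℝ) : chiSqDist q π π = 0 := by
  simp [chiSqDist]

lemma chiSqDist_le_two_mul_add (hq : ∀ a, 0 ≤ q a) (π ρ₁ ρ₂ : ι → ℝ) :
    chiSqDist q ρ₁ ρ₂ ≤ 2 * (chiSqDist q π ρ₁ + chiSqDist q π ρ₂) := by
  simp only [chiSqDist, ← Finset.sum_add_distrib, ← add_div, Finset.mul_sum, ← mul_div_assoc]
  refine Finset.sum_le_sum fun a _ => div_le_div_of_nonneg_right ?_ (hq a)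
  calc (ρ₁ a - ρ₂ a) ^ 2 = ((π a - ρ₂ a) + -(π a - ρ₁ a)) ^ 2 := by ring
    _ ≤ 2 * ((π a - ρ₂ a) ^ 2 + (-(π a - ρ₁ a)) ^ 2) := add_sq_le
    _ = 2 * ((π a - ρ₁ a) ^ 2 + (π a - ρ₂ a) ^ 2) := by ring

lemma chiSqDist_chiSqMaximizer (α η : ℝ) (hq : ∀ a, q a ≠ 0) (r₁ r₂ : ι → ℝ) :
    chiSqDist q (chiSqMaximizer α η q r₁) (chiSqMaximizer α η q r₂) =
      (η / α) ^ 2 * weightedVariance q (r₁ - r₂) := by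
  simp only [chiSqDist, chiSqMaximizer, weightedVariance, dotProduct_sub, Pi.sub_apply,
    Finset.mul_sum]
  refine Finset.sum_congr rfl fun a _ => ?_
  rw [div_eq_iff (hq a)]
  ring

lemma sum_chiSqMaximizer (α η : ℝ) (hq_sum : ∑ a, q a = 1) (h : ι → ℝ) :
    ∑ a, chiSqMaximizer α η q h a = 1 := by
  have sum_centered : ∑ a, q a * (h a - q ⬝ᵥ h) = 0 := by
    simp only [mul_sub, Finset.sum_sub_distrib, ← Finset.sum_mul, hq_sum, one_mul]
    exact sub_self _
  calc ∑ a, chiSqMaximizer α η q h a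
      = ∑ a, q a + η / α * ∑ a, q a * (h a - q ⬝ᵥ h) := by
        rw [Finset.mul_sum, ← Finset.sum_add_distrib]
        exact Finset.sum_congr rfl fun a _ => by rw [chiSqMaximizer]; ring
    _ = 1 := by rw [sum_centered, hq_sum, mul_zero, add_zero]

lemma chiSqMaximizer_mem_stdSimplex (hα : 0 < α) (hq : ∀ a, 0 ≤ q a) (hq_sum : ∑ a, q a = 1)
    {h : ι → ℝ} (hh : ∀ a, η * (q ⬝ᵥ h - h a) ≤ α) :
    chiSqMaximizer α η q h ∈ stdSimplex ℝ ι := by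
  refine ⟨fun a => mul_nonneg (hq a) ?_, sum_chiSqMaximizer α η hq_sum h⟩
  have density_eq : 1 + η / α * (h a - q ⬝ᵥ h) = (α - η * (q ⬝ᵥ h - h a)) / α := by
    field_simp
    ring
  rw [density_eq]
  exact div_nonneg (sub_nonneg.2 (hh a)) hα.le

lemma chiSqObjective_eq_sub_chiSqDist (hα : α ≠ 0) (hη : η ≠ 0) (hq : ∀ a, q a ≠ 0)
    (hq_sum : ∑ a, q a = 1) (h : ι → ℝ) {π : ι → ℝ} (hπ : ∑ a, π a = 1) :
    chiSqObjective α η q h π =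
      q ⬝ᵥ h + η / (2 * α) * weightedVariance q h -
        α / (2 * η) * chiSqDist q π (chiSqMaximizer α η q h) := by
  have complete_square : ∀ a, π a * h a - η⁻¹ * (q a * (α / 2 * (π a / q a - 1) ^ 2)) =
      (π a - q a) * (q ⬝ᵥ h) + q a * h a + η / (2 * α) * (q a * (h a - q ⬝ᵥ h) ^ 2) -
        α / (2 * η) * ((π a - chiSqMaximizer α η q h a) ^ 2 / q a) := by
    intro a
    have := hq a
    simp only [chiSqMaximizer]
    field_simp
    ring
  have sum_deviation : ∑ a, (π a - q a) * (q ⬝ᵥ h) = 0 := by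
    rw [← Finset.sum_mul, Finset.sum_sub_distrib, hπ, hq_sum, sub_self, zero_mul]
  calc chiSqObjective α η q h π
      = ∑ a, (π a * h a - η⁻¹ * (q a * (α / 2 * (π a / q a - 1) ^ 2))) := by
        rw [chiSqObjective, dotProduct, Finset.mul_sum, Finset.sum_sub_distrib]
    _ = _ := by
        simp only [complete_square, Finset.sum_sub_distrib, Finset.sum_add_distrib, sum_deviation,
          ← Finset.mul_sum, zero_add]
        rfl

lemma isGreatest_chiSqObjective (hα : 0 < α) (hη : 0 < η) (hq : ∀ a, 0 < q a)
    (hq_sum : ∑ a, q a = 1) {h : ι → ℝ} (hh : ∀ a, η * (q ⬝ᵥ h - h a) ≤ α) :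
    IsGreatest (chiSqObjective α η q h '' stdSimplex ℝ ι)
      (q ⬝ᵥ h + η / (2 * α) * weightedVariance q h) := by
  have objective_eq {π : ι → ℝ} (hπ : ∑ a, π a = 1) :=
    chiSqObjective_eq_sub_chiSqDist hα.ne' hη.ne' (fun a => (hq a).ne') hq_sum h hπ
  have maximizer_mem := chiSqMaximizer_mem_stdSimplex hα (fun a => (hq a).le) hq_sum hh
  refine ⟨⟨_, maximizer_mem, ?_⟩, ?_⟩
  · rw [objective_eq maximizer_mem.2, chiSqDist_self, mul_zero, sub_zero]
  · rintro _ ⟨π, hπ, rfl⟩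
    rw [objective_eq hπ.2]
    exact sub_le_self _
      (mul_nonneg (by positivity) (chiSqDist_nonneg (fun a => (hq a).le) _ _))

lemma sSup_chiSqObjective_sub (hα : 0 < α) (hη : 0 < η) (hq : ∀ a, 0 < q a)
    (hq_sum : ∑ a, q a = 1) {h : ι → ℝ} (hh : ∀ a, η * (q ⬝ᵥ h - h a) ≤ α)
    {π : ι → ℝ} (hπ : ∑ a, π a = 1) :
    sSup (chiSqObjective α η q h '' stdSimplex ℝ ι) - chiSqObjective α η q h π =
      α / (2 * η) * chiSqDist q π (chiSqMaximizer α η q h) := by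
  rw [(isGreatest_chiSqObjective hα hη hq hq_sum hh).csSup_eq,
    chiSqObjective_eq_sub_chiSqDist hα.ne' hη.ne' (fun a => (hq a).ne') hq_sum h hπ, sub_sub_cancel]

theorem stmt17_general (hα : 0 < α) (hη : 0 < η) (hq : ∀ a, 0 < q a) (hq_sum : ∑ a, q a = 1)
    {r₁ r₂ : ι → ℝ} (hr₁ : ∀ a, η * (q ⬝ᵥ r₁ - r₁ a) ≤ α) (hr₂ : ∀ a, η * (q ⬝ᵥ r₂ - r₂ a) ≤ α)
    {π : ι → ℝ} (hπ : ∑ a, π a = 1) :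
    η / (4 * α) * weightedVariance q (r₁ - r₂) ≤
      (sSup (chiSqObjective α η q r₁ '' stdSimplex ℝ ι) - chiSqObjective α η q r₁ π) +
        (sSup (chiSqObjective α η q r₂ '' stdSimplex ℝ ι) - chiSqObjective α η q r₂ π) := by
  set ρ₁ := chiSqMaximizer α η q r₁ with hρ₁
  set ρ₂ := chiSqMaximizer α η q r₂ with hρ₂
  rw [sSup_chiSqObjective_sub hα hη hq hq_sum hr₁ hπ,
    sSup_chiSqObjective_sub hα hη hq hq_sum hr₂ hπ]
  calc η / (4 * α) * weightedVariance q (r₁ - r₂)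
      = α / (4 * η) * chiSqDist q ρ₁ ρ₂ := by
        rw [hρ₁, hρ₂, chiSqDist_chiSqMaximizer α η fun a => (hq a).ne']
        field_simp
    _ ≤ α / (4 * η) * (2 * (chiSqDist q π ρ₁ + chiSqDist q π ρ₂)) := by
        gcongr
        exact chiSqDist_le_two_mul_add (fun a => (hq a).le) π ρ₁ ρ₂
    _ = α / (2 * η) * chiSqDist q π ρ₁ + α / (2 * η) * chiSqDist q π ρ₂ := by ring

end ChiSqRegularization

lemma setOf_exists_pmf_eq_image_stdSimplex {ι : Type*} [Fintype ι] (G : (ι → ℝ) → ℝ) :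
    {y : ℝ | ∃ π : ι → ℝ, (∀ a, 0 ≤ π a) ∧ (∑ a, π a = 1) ∧ y = G π} = G '' stdSimplex ℝ ι := by
  ext y
  simp only [mem_ofPred_eq, mem_image, stdSimplex, and_assoc, eq_comm (a := y)]

lemma weightedVariance_fin_two_uniform (h : Fin 2 → ℝ) :
    weightedVariance (fun _ => 1 / 2) h = ((h 0 - h 1) / 2) ^ 2 := by
  simp only [weightedVariance, dotProduct, Fin.sum_univ_two]
  ring

/-- Two-point suboptimality lower bound for `χ²`-type regularization: with
`f(x) = (α/2)(x−1)²`, uniform reference on `{1,2}`, and the two rewards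
`r₁ = (1/2+δ, 1/2−δ)` and `r₂ = (1/2−δ, 1/2+δ)`, every pmf `π̂` satisfies
`(sup_π F_{r₁}(π) − F_{r₁}(π̂)) + (sup_π F_{r₂}(π) − F_{r₂}(π̂)) ≥ η·δ²/α`. -/
theorem stmt17 (α η δ : ℝ) (hα : 0 < α) (hη : 0 < η) (hδ0 : 0 < δ) (hδ : δ ≤ α / η)
    (q : Fin 2 → ℝ) (hq : ∀ a, q a = 1 / 2)
    (f : ℝ → ℝ) (hf : ∀ x, f x = α / 2 * (x - 1) ^ 2)
    (F : (Fin 2 → ℝ) → (Fin 2 → ℝ) → ℝ)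
    (hF : ∀ h π, F h π = (∑ a, π a * h a) - η⁻¹ * ∑ a, q a * f (π a / q a))
    (r₁ r₂ : Fin 2 → ℝ)
    (hr₁0 : r₁ 0 = 1 / 2 + δ) (hr₁1 : r₁ 1 = 1 / 2 - δ)
    (hr₂0 : r₂ 0 = 1 / 2 - δ) (hr₂1 : r₂ 1 = 1 / 2 + δ)
    (πhat : Fin 2 → ℝ) (hπhat0 : ∀ a, 0 ≤ πhat a) (hπhat1 : ∑ a, πhat a = 1) :
    η * δ ^ 2 / α ≤
      (sSup {y : ℝ | ∃ π : Fin 2 → ℝ,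
          (∀ a, 0 ≤ π a) ∧ (∑ a, π a = 1) ∧ y = F r₁ π} - F r₁ πhat)
      + (sSup {y : ℝ | ∃ π : Fin 2 → ℝ,
          (∀ a, 0 ≤ π a) ∧ (∑ a, π a = 1) ∧ y = F r₂ π} - F r₂ πhat) := by
  obtain rfl : q = fun _ => 1 / 2 := funext hq
  obtain rfl : F = chiSqObjective α η fun _ => 1 / 2 := by
    funext h π
    simp only [hF, hf, chiSqObjective, dotProduct]
  have hηδ : η * δ ≤ α := by rwa [le_div_iff₀' hη] at hδ
  have hηδ0 : 0 < η * δ := mul_pos hη hδ0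
  rw [setOf_exists_pmf_eq_image_stdSimplex, setOf_exists_pmf_eq_image_stdSimplex]
  refine le_of_eq_of_le ?_ (stmt17_general hα hη (fun _ => by norm_num) (by simp) ?_ ?_ hπhat1)
  · rw [weightedVariance_fin_two_uniform, Pi.sub_apply, Pi.sub_apply, hr₁0, hr₁1, hr₂0, hr₂1]
    field_simp
    ring
  all_goals
    simp only [Fin.forall_fin_two, dotProduct, Fin.sum_univ_two, hr₁0, hr₁1, hr₂0, hr₂1]
    constructor <;> linarith
end

section
/- In the finite f-divergence-regularized contextual bandit setup, let r, g : S×A → ℝ and b : S → ℝ, and let π*, π̂ be policies such that for every s ∈ S, π*(·|s) maximizes π ↦ Σ_a π(a)·r(s,a) − η⁻¹·Σ_a π_ref(a|s)·f(π(a)/π_ref(a|s)) over probability mass functions on A, and π̂(·|s) maximizes the same expression with g in place of r. Then J_r(π*) − J_r(π̂) ≤ (η/α)·Σ_{s∈S} Σ_{a∈A} ρ(s)·π_ref(a|s)·(r(s,a) − g(s,a) + b(s))²; i.e., the suboptimality is controlled by the squared estimation error under the reference policy after an arbitrary per-state bias correction. -/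
/-- The `f`-divergence-regularized objective of a policy `π` with reward `h`. -/
noncomputable def Jf {S A : Type*} [Fintype S] [Fintype A]
    (ρ : S → ℝ) (πref : S → A → ℝ) (f : ℝ → ℝ) (η : ℝ)
    (h : S → A → ℝ) (π : S → A → ℝ) : ℝ :=
  ∑ s, ρ s * ((∑ a, π s a * h s a) - η⁻¹ * ∑ a, πref s a * f (π s a / πref s a))

/-! In each state the regularized value is strongly concave in the policy with respect to the
weighted squared norm `∑ a, d a ^ 2 / πref a`, so it drops quadratically away from the maximizer
`π̂` for `g`. Passing from `g` to `r` adds a term linear in `π - π̂`, and Young's inequality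
absorbs that term into the quadratic drop. Policies have constant total mass, so a per-state bias
in the reward shifts all values equally. Letting the test point on the segment from `π` to `π̂`
tend to `π̂`, rather than taking the midpoint, gives the constant `η / (2 * α)`. -/

/-- The `f`-divergence `∑ a, q a * f (p a / q a)` of `p` from `q`. The arguments need not be
normalized, and terms with `q a = 0` contribute nothing. -/
noncomputable def fDivergence {A : Type*} [Fintype A] (f : ℝ → ℝ) (p q : A → ℝ) : ℝ :=
  ∑ a, q a * f (p a / q a)

/-- The regularized objective of an action distribution `p` in a single state, with reward `h`,
reference weights `w` and inverse regularization strength `η`; `Jf` is its `ρ`-weighted sum over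
states. -/
noncomputable def regularizedValue {A : Type*} [Fintype A] (w : A → ℝ) (f : ℝ → ℝ) (η : ℝ)
    (h p : A → ℝ) : ℝ :=
  (∑ a, p a * h a) - η⁻¹ * fDivergence f p w

theorem add_le_of_isMaxOn_of_forall_segment {E : Type*} [AddCommGroup E] [Module ℝ E] {s : Set E}
    (hs : Convex ℝ s) {F : E → ℝ} {x y : E} (hx : x ∈ s) (hy : y ∈ s) (hmax : IsMaxOn F s x) {D : ℝ}
    (hF : ∀ a b : ℝ, 0 < a → 0 < b → a + b = 1 →
      a * F x + b * F y + a * b * D ≤ F (a • x + b • y)) :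
    F y + D ≤ F x := by
  have drop_of_lt_one : ∀ a ∈ Set.Ioo (0 : ℝ) 1, F y + a * D ≤ F x := by
    rintro a ⟨ha, ha1⟩
    have hb : 0 < 1 - a := sub_pos.2 ha1
    have hab : a + (1 - a) = 1 := by ring
    have hle : F (a • x + (1 - a) • y) ≤ F x := hmax (hs hx hy ha.le hb.le hab)
    refine le_of_mul_le_mul_left ?_ hb
    linarith [hF a (1 - a) ha hb hab]
  have htendsto : Filter.Tendsto (fun a : ℝ ↦ F y + a * D) (nhdsWithin 1 (Set.Iio 1))
      (nhds (F y + 1 * D)) :=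
    (Continuous.tendsto (by fun_prop) 1).mono_left nhdsWithin_le_nhds
  rw [← one_mul D]
  exact le_of_tendsto htendsto
    (Filter.mem_of_superset (Ioo_mem_nhdsLT zero_lt_one) drop_of_lt_one)

theorem perspective_le_of_strongConvexOn {f : ℝ → ℝ} {α : ℝ}
    (hf : StrongConvexOn (Set.Ici 0) α f) {w p q : ℝ} (hw : 0 < w) (hp : 0 ≤ p) (hq : 0 ≤ q)
    {a b : ℝ} (ha : 0 ≤ a) (hb : 0 ≤ b) (hab : a + b = 1) :
    w * f ((a * p + b * q) / w) ≤
      a * (w * f (p / w)) + b * (w * f (q / w)) - a * b * (α / 2 * ((p - q) ^ 2 / w)) := by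
  have hconv : f (a * (p / w) + b * (q / w)) ≤
      a * f (p / w) + b * f (q / w) - a * b * (α / 2 * (p / w - q / w) ^ 2) := by
    simpa only [smul_eq_mul, Real.norm_eq_abs, sq_abs] using
      hf.2 (div_nonneg hp hw.le) (div_nonneg hq hw.le) ha hb hab
  calc w * f ((a * p + b * q) / w)
      = w * f (a * (p / w) + b * (q / w)) := by rw [add_div, mul_div_assoc, mul_div_assoc]
    _ ≤ w * (a * f (p / w) + b * f (q / w) - a * b * (α / 2 * (p / w - q / w) ^ 2)) := by gcongr
    _ = a * (w * f (p / w)) + b * (w * f (q / w)) - a * b * (α / 2 * ((p - q) ^ 2 / w)) := by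
      field_simp

theorem mul_le_young_weighted {c w : ℝ} (hc : 0 < c) (hw : 0 < w) (d u : ℝ) :
    d * u ≤ c / 2 * (d ^ 2 / w) + c⁻¹ / 2 * (w * u ^ 2) := by
  have hsq : c / 2 * (d ^ 2 / w) + c⁻¹ / 2 * (w * u ^ 2) - d * u =
      (c * d - w * u) ^ 2 / (2 * c * w) := by
    field_simp
    ring
  have hnonneg : 0 ≤ (c * d - w * u) ^ 2 / (2 * c * w) := by positivity
  linarith

section SingleState

variable {A : Type*} [Fintype A] {f : ℝ → ℝ} {α η : ℝ} {w : A → ℝ}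

theorem fDivergence_le_of_strongConvexOn (hf : StrongConvexOn (Set.Ici 0) α f)
    (hw : ∀ i, 0 < w i) {p q : A → ℝ} (hp : 0 ≤ p) (hq : 0 ≤ q)
    {a b : ℝ} (ha : 0 ≤ a) (hb : 0 ≤ b) (hab : a + b = 1) :
    fDivergence f (a • p + b • q) w ≤ a * fDivergence f p w + b * fDivergence f q w -
      a * b * (α / 2 * ∑ i, (p i - q i) ^ 2 / w i) := by
  simp only [fDivergence, Finset.mul_sum, ← Finset.sum_add_distrib, ← Finset.sum_sub_distrib]
  exact Finset.sum_le_sum fun i _ ↦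
    perspective_le_of_strongConvexOn hf (hw i) (hp i) (hq i) ha hb hab

theorem le_regularizedValue_of_strongConvexOn (hη : 0 < η) (hf : StrongConvexOn (Set.Ici 0) α f)
    (hw : ∀ i, 0 < w i) (h : A → ℝ) {p q : A → ℝ} (hp : 0 ≤ p) (hq : 0 ≤ q)
    {a b : ℝ} (ha : 0 ≤ a) (hb : 0 ≤ b) (hab : a + b = 1) :
    a * regularizedValue w f η h p + b * regularizedValue w f η h q +
      a * b * (α / η / 2 * ∑ i, (p i - q i) ^ 2 / w i) ≤
        regularizedValue w f η h (a • p + b • q) := by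
  have hlinear : ∑ i, (a • p + b • q) i * h i = a * ∑ i, p i * h i + b * ∑ i, q i * h i := by
    simp only [Pi.add_apply, Pi.smul_apply, smul_eq_mul, add_mul, mul_assoc,
      Finset.sum_add_distrib, Finset.mul_sum]
  have hdiv := mul_le_mul_of_nonneg_left
    (fDivergence_le_of_strongConvexOn hf hw hp hq ha hb hab) (inv_nonneg.2 hη.le)
  simp only [regularizedValue, hlinear]
  linear_combination hdiv

theorem regularizedValue_add_le_of_isMaxOn (hη : 0 < η) (hf : StrongConvexOn (Set.Ici 0) α f)
    (hw : ∀ a, 0 < w a) {s : Set (A → ℝ)} (hs : Convex ℝ s) (hs0 : s ⊆ Set.Ici 0)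
    {h p q : A → ℝ} (hp : p ∈ s) (hq : q ∈ s) (hmax : IsMaxOn (regularizedValue w f η h) s q) :
    regularizedValue w f η h p + α / η / 2 * ∑ a, (p a - q a) ^ 2 / w a ≤
      regularizedValue w f η h q := by
  simp only [sub_sq_comm (p _)]
  exact add_le_of_isMaxOn_of_forall_segment hs hq hp hmax fun _ _ ha hb hab ↦
    le_regularizedValue_of_strongConvexOn hη hf hw h (hs0 hq) (hs0 hp) ha.le hb.le hab

theorem regularizedValue_sub_eq_add_sum (w : A → ℝ) (f : ℝ → ℝ) (η : ℝ) (r g p q : A → ℝ) :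
    regularizedValue w f η r p - regularizedValue w f η r q =
      regularizedValue w f η g p - regularizedValue w f η g q +
        ∑ a, (p a - q a) * (r a - g a) := by
  simp only [regularizedValue, sub_mul, mul_sub, Finset.sum_sub_distrib]
  ring

theorem regularizedValue_add_const (w : A → ℝ) (f : ℝ → ℝ) (η : ℝ) (h : A → ℝ) (c : ℝ)
    (p : A → ℝ) :
    regularizedValue w f η (fun a ↦ h a + c) p =
      regularizedValue w f η h p + (∑ a, p a) * c := by
  simp only [regularizedValue, mul_add, Finset.sum_add_distrib, ← Finset.sum_mul]
  ring

theorem regularizedValue_sub_le_of_isMaxOn (hη : 0 < η) (hα : 0 < α)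
    (hf : StrongConvexOn (Set.Ici 0) α f) (hw : ∀ a, 0 < w a)
    {s : Set (A → ℝ)} (hs : Convex ℝ s) (hs0 : s ⊆ Set.Ici 0) {g p q : A → ℝ} (r : A → ℝ)
    (hp : p ∈ s) (hq : q ∈ s) (hmax : IsMaxOn (regularizedValue w f η g) s q) :
    regularizedValue w f η r p - regularizedValue w f η r q ≤
      η / α / 2 * ∑ a, w a * (r a - g a) ^ 2 := by
  have hgrowth := regularizedValue_add_le_of_isMaxOn hη hf hw hs hs0 hp hq hmax
  have hyoung : ∑ a, (p a - q a) * (r a - g a) ≤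
      α / η / 2 * ∑ a, (p a - q a) ^ 2 / w a + η / α / 2 * ∑ a, w a * (r a - g a) ^ 2 := by
    rw [← inv_div α η, Finset.mul_sum, Finset.mul_sum, ← Finset.sum_add_distrib]
    exact Finset.sum_le_sum fun a _ ↦ mul_le_young_weighted (div_pos hα hη) (hw a) _ _
  linarith [regularizedValue_sub_eq_add_sum w f η r g p q]

theorem regularizedValue_sub_le_of_isMaxOn_stdSimplex (hη : 0 < η) (hα : 0 < α)
    (hf : StrongConvexOn (Set.Ici 0) α f) (hw : ∀ a, 0 < w a) {g p q : A → ℝ} (r : A → ℝ) (c : ℝ)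
    (hp : p ∈ stdSimplex ℝ A) (hq : q ∈ stdSimplex ℝ A)
    (hmax : IsMaxOn (regularizedValue w f η g) (stdSimplex ℝ A) q) :
    regularizedValue w f η r p - regularizedValue w f η r q ≤
      η / α / 2 * ∑ a, w a * (r a - g a + c) ^ 2 := by
  have hbound := regularizedValue_sub_le_of_isMaxOn hη hα hf hw (convex_stdSimplex ℝ A)
    (fun _ hπ ↦ hπ.1) (fun a ↦ r a + c) hp hq hmax
  simp only [regularizedValue_add_const, hp.2, hq.2, add_sub_add_right_eq_sub] at hbound
  simpa only [add_sub_right_comm] using hbound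

end SingleState

theorem stmt18_general {S A : Type*} [Fintype S] [Fintype A] {ρ : S → ℝ} (hρ : ∀ s, 0 ≤ ρ s)
    {πref : S → A → ℝ} (hpos : ∀ s a, 0 < πref s a) {η α : ℝ} (hη : 0 < η) (hα : 0 < α)
    {f : ℝ → ℝ} (hf : StrongConvexOn (Set.Ici 0) α f) (r : S → A → ℝ) {g : S → A → ℝ} (b : S → ℝ)
    {π πhat : S → A → ℝ} (hπ : ∀ s, π s ∈ stdSimplex ℝ A) (hπhat : ∀ s, πhat s ∈ stdSimplex ℝ A)
    (hmax : ∀ s, IsMaxOn (regularizedValue (πref s) f η (g s)) (stdSimplex ℝ A) (πhat s)) :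
    Jf ρ πref f η r π - Jf ρ πref f η r πhat ≤
      η / α / 2 * ∑ s, ∑ a, ρ s * πref s a * (r s a - g s a + b s) ^ 2 := by
  calc Jf ρ πref f η r π - Jf ρ πref f η r πhat
      = ∑ s, ρ s * (regularizedValue (πref s) f η (r s) (π s) -
          regularizedValue (πref s) f η (r s) (πhat s)) := by
        simp only [Jf, regularizedValue, fDivergence, mul_sub, Finset.sum_sub_distrib]
    _ ≤ ∑ s, ρ s * (η / α / 2 * ∑ a, πref s a * (r s a - g s a + b s) ^ 2) := by
        gcongr with s
        · exact hρ s
        · exact regularizedValue_sub_le_of_isMaxOn_stdSimplex hη hα hf (hpos s) (r s) (b s)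
            (hπ s) (hπhat s) (hmax s)
    _ = η / α / 2 * ∑ s, ∑ a, ρ s * πref s a * (r s a - g s a + b s) ^ 2 := by
        simp only [Finset.mul_sum, mul_assoc, mul_left_comm]

/-- Bias-invariant, coverage-free suboptimality bound for `f`-divergence
regularization with `α`-strongly convex `f`: if `π*` and `π̂` maximize the
regularized objective for rewards `r` and `g` respectively, then for any
per-state bias `b`, `J_r(π*) − J_r(π̂) ≤ (η/α)·E_{ρ × π_ref}[(r − g + b)²]`. -/
theorem stmt18 {S A : Type*} [Fintype S] [Fintype A] [Nonempty S] [Nonempty A]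
    (ρ : S → ℝ) (hρ0 : ∀ s, 0 ≤ ρ s) (hρ1 : ∑ s, ρ s = 1)
    (πref : S → A → ℝ) (hpos : ∀ s a, 0 < πref s a) (hsum : ∀ s, ∑ a, πref s a = 1)
    (η : ℝ) (hη : 0 < η) (α : ℝ) (hα : 0 < α)
    (f : ℝ → ℝ) (hf : ConvexOn ℝ (Set.Ici (0 : ℝ)) (fun x => f x - α / 2 * x ^ 2))
    (r g : S → A → ℝ) (b : S → ℝ) (πstar πhat : S → A → ℝ)
    (hπstar0 : ∀ s a, 0 ≤ πstar s a) (hπstar1 : ∀ s, ∑ a, πstar s a = 1)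
    (hπhat0 : ∀ s a, 0 ≤ πhat s a) (hπhat1 : ∀ s, ∑ a, πhat s a = 1)
    (hstar : ∀ s, ∀ π : A → ℝ, (∀ a, 0 ≤ π a) → (∑ a, π a = 1) →
      (∑ a, π a * r s a) - η⁻¹ * ∑ a, πref s a * f (π a / πref s a) ≤
        (∑ a, πstar s a * r s a) - η⁻¹ * ∑ a, πref s a * f (πstar s a / πref s a))
    (hhat : ∀ s, ∀ π : A → ℝ, (∀ a, 0 ≤ π a) → (∑ a, π a = 1) →
      (∑ a, π a * g s a) - η⁻¹ * ∑ a, πref s a * f (π a / πref s a) ≤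
        (∑ a, πhat s a * g s a) - η⁻¹ * ∑ a, πref s a * f (πhat s a / πref s a)) :
    Jf ρ πref f η r πstar - Jf ρ πref f η r πhat ≤
      η / α * ∑ s, ∑ a, ρ s * πref s a * (r s a - g s a + b s) ^ 2 := by
  have hstrong : StrongConvexOn (Set.Ici 0) α f :=
    strongConvexOn_iff_convex.2 (by simpa only [Real.norm_eq_abs, sq_abs] using hf)
  have hsq : 0 ≤ ∑ s, ∑ a, ρ s * πref s a * (r s a - g s a + b s) ^ 2 :=
    Finset.sum_nonneg fun s _ ↦ Finset.sum_nonneg fun a _ ↦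
      mul_nonneg (mul_nonneg (hρ0 s) (hpos s a).le) (sq_nonneg _)
  exact (stmt18_general hρ0 hpos hη hα hstrong r b (fun s ↦ ⟨hπstar0 s, hπstar1 s⟩)
    (fun s ↦ ⟨hπhat0 s, hπhat1 s⟩) fun s π hπ ↦ hhat s π hπ.1 hπ.2).trans
      (mul_le_mul_of_nonneg_right (half_le_self (div_pos hη hα).le) hsq)
end
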